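/- Define the sesquilinear pairing (p,q)_k = (p*(T(k)) q)(0) on the polynomial ring P of a finite complex reflection group G. Then: (i) (p^g, q^g)_k = (p,q)_k for all g ∈ G; (ii) (ξ* p, q)_k = (p, T_ξ(k) q)_k for all ξ ∈ V; and (iii) the homogeneous-isotypic components P_{m,τ} and P_{l,σ} are orthogonal unless m = l and τ = σ. -/

import Mathlib

open MvPolynomial Finset CategoryTheory

noncomputable section

/-- The matrix underlying an element of a subgroup of the unitary group. -/
def matOf {n : ℕ} {G : Subgroup (Matrix.unitaryGroup (Fin n) ℂ)} (g : G) :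
    Matrix (Fin n) (Fin n) ℂ :=
  ((g : Matrix.unitaryGroup (Fin n) ℂ) : Matrix (Fin n) (Fin n) ℂ)

/-- Substitution action `p(x) ↦ p(Mx)` of a matrix on polynomials; the action of `g ∈ G`
on polynomials, `p^g(x) = p(g⁻¹x)`, is `act (matOf g⁻¹)`. -/
def act (n : ℕ) (M : Matrix (Fin n) (Fin n) ℂ) :
    MvPolynomial (Fin n) ℂ →ₐ[ℂ] MvPolynomial (Fin n) ℂ :=
  aeval fun i => ∑ j, C (M i j) * X j

/-- `p*(T)` on a monomial `x^α`: the operator `∏ᵢ Tᵢ^{αᵢ}` (the `Tᵢ` commute). -/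
def monOp {n : ℕ} (T : Fin n → MvPolynomial (Fin n) ℂ → MvPolynomial (Fin n) ℂ)
    (α : Fin n →₀ ℕ) : MvPolynomial (Fin n) ℂ → MvPolynomial (Fin n) ℂ :=
  ((List.finRange n).map fun i => (T i)^[α i]).foldr (· ∘ ·) id

/-- The pairing `(p,q)_k = (p*(T(k))q)(0)`, where `p*` is obtained from `p` by
conjugating the coefficients and substituting `Tᵢ` for `xᵢ`. -/
def pairK {n : ℕ} (T : Fin n → MvPolynomial (Fin n) ℂ → MvPolynomial (Fin n) ℂ)
    (p q : MvPolynomial (Fin n) ℂ) : ℂ :=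
  eval (0 : Fin n → ℂ)
    (∑ α ∈ p.support, (starRingEnd ℂ) (coeff α p) • monOp T α q)

/-! The pairing `⟨p, q⟩ = (p*(T) q)(0)` is determined by `⟨a, q⟩ = ā q(0)` for constants `a` and by
contravariance `⟨p xᵢ, q⟩ = ⟨p, Tᵢ q⟩`, so invariance and the orthogonality of different degrees
follow by induction on `p`. For `Tᵢ = ∂ᵢ` it is the Fischer pairing, for which
`⟨x^α, q⟩` is `α!` times the `x^α`-coefficient of `q`; it is therefore anisotropic, and it is
invariant under the whole unitary group by the chain rule. Hence every irreducible `τ` that occurs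
in the polynomials carries an invariant nondegenerate sesquilinear form, so an invariant pairing of
`τ` with `σ` amounts to an equivariant map `σ → τ`, which vanishes by Schur's lemma unless `τ ≅ σ`.
-/

section OperatorPairing

variable {ι R A : Type*} [CommRing R]

/-- Substitution of pairwise commuting elements `T i` of a possibly noncommutative algebra for the
variables of a polynomial, the noncommutative-target analogue of `MvPolynomial.aeval`. -/
def commAeval [Ring A] [Algebra R A] (T : ι → A) (hT : ∀ i j, Commute (T i) (T j)) :
    MvPolynomial ι R →ₐ[R] A :=
  have : IsMulCommutative (Algebra.adjoin R (Set.range T)) :=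
    Algebra.isMulCommutative_adjoin R (by rintro _ ⟨i, rfl⟩ _ ⟨j, rfl⟩; exact hT i j)
  letI : CommRing (Algebra.adjoin R (Set.range T)) :=
    { mul_comm := this.is_comm.comm }
  (Algebra.adjoin R (Set.range T)).val.comp
    (aeval fun i => ⟨T i, Algebra.subset_adjoin ⟨i, rfl⟩⟩)

lemma commAeval_X [Ring A] [Algebra R A] (T : ι → A) (hT : ∀ i j, Commute (T i) (T j)) (i : ι) :
    commAeval (R := R) T hT (X i) = T i := by
  simp [commAeval]

lemma finsupp_nat_induction_add_single {motive : (ι →₀ ℕ) → Prop} (zero : motive 0)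
    (add_single : ∀ α i, motive α → motive (α + Finsupp.single i 1)) (α : ι →₀ ℕ) : motive α := by
  induction α using Finsupp.induction₂ with
  | zero => exact zero
  | add_single i k α _ _ ih =>
    clear * - ih add_single
    induction k with
    | zero => simpa using ih
    | succ k ihk => simpa [add_assoc] using add_single _ i ihk

variable [StarRing R] (T : ι → Module.End R (MvPolynomial ι R)) (hT : ∀ i j, Commute (T i) (T j))

/-- The sesquilinear pairing `(p, q) ↦ (p*(T) q)(0)` attached to commuting operators `T i`, where
`p*` has the conjugate coefficients of `p`; the value at `0` is the constant coefficient. -/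
def operatorPairing : MvPolynomial ι R →ₗ⋆[R] MvPolynomial ι R →ₗ[R] R where
  toFun p := lcoeff R 0 ∘ₗ commAeval T hT (map (starRingEnd R) p)
  map_add' p q := by simp [LinearMap.comp_add]
  map_smul' c p := by
    rw [smul_eq_C_mul, map_mul, map_C, ← smul_eq_C_mul, map_smul, LinearMap.comp_smul]

lemma operatorPairing_apply (p q : MvPolynomial ι R) :
    operatorPairing T hT p q = coeff 0 (commAeval T hT (map (starRingEnd R) p) q) := rfl

lemma operatorPairing_C_left (a : R) (q : MvPolynomial ι R) :
    operatorPairing T hT (C a) q = starRingEnd R a * coeff 0 q := by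
  rw [operatorPairing_apply, map_C, ← algebraMap_eq, AlgHom.commutes, Module.algebraMap_end_apply,
    coeff_smul, smul_eq_mul]

lemma operatorPairing_mul_X_left (p : MvPolynomial ι R) (i : ι) (q : MvPolynomial ι R) :
    operatorPairing T hT (p * X i) q = operatorPairing T hT p (T i q) := by
  simp only [operatorPairing_apply, map_mul, map_X, commAeval_X, Module.End.mul_apply]

lemma operatorPairing_sum_mul_left [Fintype ι] (c : ι → R) (p q : MvPolynomial ι R) :
    operatorPairing T hT ((∑ i, C (c i) * X i) * p) q =
      operatorPairing T hT p (∑ i, starRingEnd R (c i) • T i q) := by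
  have hterm (i : ι) : C (c i) * X i * p = c i • (p * X i) := by
    rw [smul_eq_C_mul, mul_assoc, mul_comm (X i)]
  simp only [Finset.sum_mul, hterm, map_sum, LinearMap.sum_apply, map_smulₛₗ,
    LinearMap.smul_apply, operatorPairing_mul_X_left, RingHom.id_apply]

lemma operatorPairing_monomial_eq_zero
    (hTdeg : ∀ i m p, IsHomogeneous p (m + 1) → IsHomogeneous (T i p) m)
    (hT0 : ∀ i c, T i (C c) = 0) (α : ι →₀ ℕ) (a : R) {l : ℕ} {q : MvPolynomial ι R}
    (hq : q.IsHomogeneous l) (hα : α.degree ≠ l) : operatorPairing T hT (monomial α a) q = 0 := by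
  induction α using finsupp_nat_induction_add_single generalizing l q with
  | zero =>
    have hq0 : coeff 0 q = 0 := hq.coeff_eq_zero (by simpa using hα)
    rw [← C_apply, operatorPairing_C_left, hq0, mul_zero]
  | add_single α i ih =>
    rw [monomial_add_single, pow_one, operatorPairing_mul_X_left]
    cases l with
    | zero =>
      have hqC := totalDegree_eq_zero_iff_eq_C.1 ((totalDegree_zero_iff_isHomogeneous _).2 hq)
      rw [hqC, hT0, map_zero]
    | succ l => exact ih (hTdeg i l q hq) (by simpa using hα)

lemma operatorPairing_eq_zero_of_degree_ne
    (hTdeg : ∀ i m p, IsHomogeneous p (m + 1) → IsHomogeneous (T i p) m)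
    (hT0 : ∀ i c, T i (C c) = 0) {m l : ℕ} {p q : MvPolynomial ι R}
    (hp : p.IsHomogeneous m) (hq : q.IsHomogeneous l) (hml : m ≠ l) :
    operatorPairing T hT p q = 0 := by
  rw [p.as_sum, map_sum, LinearMap.sum_apply]
  refine Finset.sum_eq_zero fun α hα => ?_
  have hαm : α.degree = m := by
    by_contra h
    exact mem_support_iff.1 hα (hp.coeff_eq_zero h)
  exact operatorPairing_monomial_eq_zero T hT hTdeg hT0 α _ hq (hαm ▸ hml)

end OperatorPairing

lemma monOp_eq_commAeval_monomial {n : ℕ} (T : Fin n → Module.End ℂ (MvPolynomial (Fin n) ℂ))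
    (hT : ∀ i j, Commute (T i) (T j)) (α : Fin n →₀ ℕ) (q : MvPolynomial (Fin n) ℂ) :
    monOp (fun i => T i) α q = commAeval T hT (monomial α (1 : ℂ)) q := by
  have hmonomial : monomial α (1 : ℂ) =
      ((List.finRange n).map fun i => (X i : MvPolynomial (Fin n) ℂ) ^ α i).prod := by
    rw [monomial_eq, C_1, one_mul, Finsupp.prod_fintype _ _ (by simp), ← Fin.prod_univ_def]
  have hprod (L : List (Fin n)) : (L.map fun i => (T i)^[α i]).foldr (· ∘ ·) id q =
      (L.map fun i => T i ^ α i).prod q := by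
    induction L with
    | nil => rfl
    | cons i L ih =>
      simp only [List.map_cons, List.foldr_cons, Function.comp_apply, ih, List.prod_cons,
        Module.End.mul_apply, Module.End.pow_apply]
  rw [monOp, hprod, hmonomial, map_list_prod, List.map_map]
  simp only [Function.comp_def, map_pow, commAeval_X]

lemma pairK_eq_operatorPairing {n : ℕ} (T : Fin n → Module.End ℂ (MvPolynomial (Fin n) ℂ))
    (hT : ∀ i j, Commute (T i) (T j)) (p q : MvPolynomial (Fin n) ℂ) :
    pairK (fun i => T i) p q = operatorPairing T hT p q := by
  conv_rhs => rw [p.as_sum]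
  rw [pairK, eval_zero, map_sum, map_sum, LinearMap.sum_apply]
  refine Finset.sum_congr rfl fun α _ => ?_
  have hmonomial (c : ℂ) : monomial α c = c • monomial α (1 : ℂ) := by
    rw [smul_monomial, smul_eq_mul, mul_one]
  rw [monOp_eq_commAeval_monomial T hT, operatorPairing_apply, map_monomial, constantCoeff_eq,
    hmonomial (starRingEnd ℂ _), map_smul, LinearMap.smul_apply]

section Substitution

variable {n : ℕ}

lemma act_mul (M N : Matrix (Fin n) (Fin n) ℂ) : act n (N * M) = (act n M).comp (act n N) := by
  refine algHom_ext fun i => ?_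
  simp only [act, AlgHom.comp_apply, aeval_X, map_sum, map_mul, algHom_C, algebraMap_eq,
    Matrix.mul_apply, Finset.sum_mul, Finset.mul_sum, mul_assoc]
  exact Finset.sum_comm

lemma act_one : act n 1 = AlgHom.id ℂ _ := by
  refine algHom_ext fun i => ?_
  simp [act, Matrix.one_apply]

lemma coeff_zero_act (M : Matrix (Fin n) (Fin n) ℂ) (p : MvPolynomial (Fin n) ℂ) :
    coeff 0 (act n M p) = coeff 0 p := by
  have : (aeval (0 : Fin n → ℂ)).comp (act n M) = aeval (0 : Fin n → ℂ) :=
    algHom_ext fun i => by simp [act]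
  simpa [constantCoeff_eq] using DFunLike.congr_fun this p

lemma operatorPairing_act (T : Fin n → Module.End ℂ (MvPolynomial (Fin n) ℂ))
    (hT : ∀ i j, Commute (T i) (T j)) (M : Matrix (Fin n) (Fin n) ℂ)
    (hM : ∀ i q, act n M (T i q) = ∑ j, starRingEnd ℂ (M i j) • T j (act n M q))
    (p q : MvPolynomial (Fin n) ℂ) :
    operatorPairing T hT (act n M p) (act n M q) = operatorPairing T hT p q := by
  induction p using MvPolynomial.induction_on generalizing q with
  | C a => rw [algHom_C, algebraMap_eq, operatorPairing_C_left, operatorPairing_C_left,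
      coeff_zero_act]
  | add p₁ p₂ ih₁ ih₂ => simp only [map_add, LinearMap.add_apply, ih₁, ih₂]
  | mul_X p i ih =>
    have hX : act n M (X i) = ∑ j, C (M i j) * X j := aeval_X _ i
    rw [map_mul, hX, mul_comm, operatorPairing_sum_mul_left, ← hM, ih, operatorPairing_mul_X_left]

variable (G : Subgroup (Matrix.unitaryGroup (Fin n) ℂ))

/-- The representation `g ↦ (p ↦ p^g)`, `p^g(x) = p(g⁻¹x)`, of `G` on polynomials. -/
def polyRep : Representation ℂ G (MvPolynomial (Fin n) ℂ) where
  toFun g := (act n (matOf g⁻¹)).toLinearMap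
  map_one' := by
    rw [inv_one, show matOf (1 : G) = 1 from rfl, act_one]; rfl
  map_mul' g h := by
    rw [mul_inv_rev, show matOf (h⁻¹ * g⁻¹) = matOf h⁻¹ * matOf g⁻¹ from rfl, act_mul]; rfl

variable {G}

lemma polyRep_apply (g : G) (p : MvPolynomial (Fin n) ℂ) :
    polyRep G g p = act n (matOf g⁻¹) p := rfl

lemma act_matOf_inv_act (g : G) (p : MvPolynomial (Fin n) ℂ) :
    act n (matOf g⁻¹) (act n (matOf g) p) = p := by
  rw [← AlgHom.comp_apply, ← act_mul, show matOf g * matOf g⁻¹ = 1 by simp [matOf], act_one,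
    AlgHom.id_apply]

lemma star_matOf_inv_apply (g : G) (i j : Fin n) :
    starRingEnd ℂ (matOf g⁻¹ i j) = matOf g j i := by
  simp [matOf, Matrix.star_apply]

lemma operatorPairing_polyRep (T : Fin n → Module.End ℂ (MvPolynomial (Fin n) ℂ))
    (hT : ∀ i j, Commute (T i) (T j))
    (hTequiv : ∀ (g : G) i p, act n (matOf g⁻¹) (T i (act n (matOf g) p)) =
      ∑ j, matOf g j i • T j p)
    (g : G) (p q : MvPolynomial (Fin n) ℂ) :
    operatorPairing T hT (polyRep G g p) (polyRep G g q) = operatorPairing T hT p q := by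
  refine operatorPairing_act T hT _ (fun i q => ?_) p q
  have hinv : act n (matOf g) (act n (matOf g⁻¹) q) = q := by
    simpa only [inv_inv] using act_matOf_inv_act g⁻¹ q
  simpa only [hinv, star_matOf_inv_apply] using hTequiv g i (act n (matOf g⁻¹) q)

end Substitution

section FischerPairing

variable {ι R : Type*} [CommRing R]

lemma commute_pderiv (i j : ι) :
    Commute (pderiv (R := R) i).toLinearMap (pderiv (R := R) j).toLinearMap := by
  classical
  have hcomm : ⁅pderiv (R := R) i, pderiv (R := R) j⁆ = 0 := derivation_ext fun l => by
    simp [Derivation.commutator_apply, pderiv_X, Pi.single_apply, apply_ite]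
  refine LinearMap.ext fun p => sub_eq_zero.1 ?_
  simpa [Derivation.commutator_apply] using DFunLike.congr_fun hcomm p

variable [StarRing R]

/-- The Fischer pairing `(p, q) ↦ (p*(∂) q)(0)`, the case `T i = ∂ i` of `operatorPairing`. -/
def fischerPairing : MvPolynomial ι R →ₗ⋆[R] MvPolynomial ι R →ₗ[R] R :=
  operatorPairing (fun i => (pderiv i).toLinearMap) commute_pderiv

lemma fischerPairing_monomial_left (α : ι →₀ ℕ) (a : R) (q : MvPolynomial ι R) :
    fischerPairing (monomial α a) q =
      starRingEnd R a * (α.prod fun _ k => (k.factorial : R)) * coeff α q := by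
  induction α using finsupp_nat_induction_add_single generalizing q with
  | zero => rw [← C_apply, fischerPairing, operatorPairing_C_left, Finsupp.prod_zero_index, mul_one]
  | add_single α i ih =>
    classical
    have hprod : (α + Finsupp.single i 1).prod (fun _ k => (k.factorial : R)) =
        (α.prod fun _ k => (k.factorial : R)) * (α i + 1) := by
      rw [← Finsupp.mul_prod_erase' _ i _ (by simp), ← Finsupp.mul_prod_erase' α i _ (by simp),
        Finsupp.erase_add, Finsupp.erase_single, add_zero, Finsupp.add_apply,
        Finsupp.single_eq_same, Nat.factorial_succ]
      push_cast
      ring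
    rw [monomial_add_single, pow_one, fischerPairing, operatorPairing_mul_X_left, ← fischerPairing,
      ih, hprod]
    simp only [Derivation.coeFn_coe, coeff_pderiv]
    ring

lemma fischerPairing_self_eq_zero {p : MvPolynomial ι ℂ} (hp : fischerPairing p p = 0) :
    p = 0 := by
  have hsum : fischerPairing p p = ((∑ α ∈ p.support,
      (α.prod fun _ k => (k.factorial : ℝ)) * Complex.normSq (coeff α p) : ℝ) : ℂ) := by
    conv_lhs => enter [1]; rw [p.as_sum]
    simp only [map_sum, LinearMap.sum_apply, fischerPairing_monomial_left, Finsupp.prod]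
    push_cast
    refine Finset.sum_congr rfl fun α _ => ?_
    rw [Complex.normSq_eq_conj_mul_self]
    ring
  contrapose! hp
  rw [hsum]
  refine Complex.ofReal_ne_zero.2 (Finset.sum_pos (fun α hα => ?_) (support_nonempty.2 hp)).ne'
  exact mul_pos (Finset.prod_pos fun i _ => by positivity)
    (Complex.normSq_pos.2 (mem_support_iff.1 hα))

lemma pderiv_act {n : ℕ} (M : Matrix (Fin n) (Fin n) ℂ) (j : Fin n) (p : MvPolynomial (Fin n) ℂ) :
    pderiv j (act n M p) = ∑ i, M i j • act n M (pderiv i p) := by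
  classical
  induction p using MvPolynomial.induction_on with
  | C a => simp
  | add p₁ p₂ ih₁ ih₂ => simp only [map_add, ih₁, ih₂, smul_add, Finset.sum_add_distrib]
  | mul_X p k ih =>
    have hX : pderiv j (act n M (X k)) = C (M k j) := by
      simp [act, pderiv_X, Pi.single_apply]
    have hterm (i : Fin n) : M i j • act n M (pderiv i (p * X k)) =
        act n M (X k) * (M i j • act n M (pderiv i p)) +
          if i = k then act n M p * C (M k j) else 0 := by
      rw [Derivation.leibniz, map_add, smul_add, add_comm, smul_eq_mul, map_mul, mul_smul_comm]
      congr 1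
      rcases eq_or_ne i k with rfl | hik
      · rw [pderiv_X_self, smul_eq_mul, mul_one, if_pos rfl, smul_eq_C_mul, mul_comm]
      · rw [pderiv_X_of_ne hik.symm, smul_zero, map_zero, smul_zero, if_neg hik]
    rw [map_mul, Derivation.leibniz, hX, ih, Finset.sum_congr rfl fun i _ => hterm i,
      Finset.sum_add_distrib, Finset.sum_ite_eq' univ k, if_pos (mem_univ k), ← Finset.mul_sum,
      smul_eq_mul, smul_eq_mul, add_comm]

lemma fischerPairing_polyRep {n : ℕ} {G : Subgroup (Matrix.unitaryGroup (Fin n) ℂ)} (g : G)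
    (p q : MvPolynomial (Fin n) ℂ) :
    fischerPairing (polyRep G g p) (polyRep G g q) = fischerPairing p q := by
  refine operatorPairing_polyRep _ commute_pderiv (fun g i p => ?_) g p q
  simp only [Derivation.coeFn_coe, pderiv_act, map_sum, map_smul, act_matOf_inv_act]

end FischerPairing

section Schur

open Representation

variable {K V W P : Type*} [Field K] [AddCommGroup V] [Module K V] [AddCommGroup W] [Module K W]
  [AddCommGroup P] [Module K P] {I : K →+* K}

lemma exists_linearMap_eq_of_separatingRight [FiniteDimensional K V] {H : V →ₛₗ[I] V →ₗ[K] K}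
    (hH : H.SeparatingRight) (B : V →ₛₗ[I] W →ₗ[K] K) :
    ∃ A : W →ₗ[K] V, ∀ v w, B v w = H v (A w) := by
  let b := Module.finBasis K V
  let coords : V →ₗ[K] Fin (Module.finrank K V) → K := LinearMap.pi fun i => H (b i)
  have hcoords : Function.Injective coords := by
    refine (injective_iff_map_eq_zero coords).2 fun v hv => hH v fun u => ?_
    have hflip : H.flip v = 0 := b.ext fun i => congr_fun hv i
    exact LinearMap.congr_fun hflip u
  let e := LinearEquiv.ofInjectiveOfFinrankEq coords hcoords (by simp)
  refine ⟨e.symm.toLinearMap ∘ₗ LinearMap.pi fun i => B (b i), fun v w => ?_⟩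
  have hflip : B.flip w = H.flip (e.symm fun i => B (b i) w) := b.ext fun i =>
    (congr_fun (e.apply_symm_apply fun i => B (b i) w) i).symm
  exact LinearMap.congr_fun hflip v

variable {G : Type*} [Group G] {ρ : Representation K G V} {σ : Representation K G W}
  {π : Representation K G P}

lemma eq_zero_of_subsingleton_intertwiningMap [FiniteDimensional K V]
    [Subsingleton (IntertwiningMap σ ρ)] {H : V →ₛₗ[I] V →ₗ[K] K} (hH : H.SeparatingRight)
    (hHinv : ∀ g v v', H (ρ g v) (ρ g v') = H v v') {B : V →ₛₗ[I] W →ₗ[K] K}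
    (hBinv : ∀ g v w, B (ρ g v) (σ g w) = B v w) : B = 0 := by
  obtain ⟨A, hA⟩ := exists_linearMap_eq_of_separatingRight hH B
  have hequiv (g : G) (w : W) : A (σ g w) = ρ g (A w) := by
    refine sub_eq_zero.1 (hH _ fun v => ?_)
    rw [map_sub, sub_eq_zero, ← ρ.self_inv_apply g v, ← hA, hBinv, hHinv, hA]
  have hA0 : A.intertwiningMap_of_isIntertwiningMap σ ρ hequiv = 0 := Subsingleton.elim _ _
  ext v w
  have hAw : A w = 0 := DFunLike.congr_fun hA0 w
  rw [hA, hAw, map_zero, LinearMap.zero_apply, LinearMap.zero_apply]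

lemma apply_intertwiningMap_eq_zero [FiniteDimensional K V] [ρ.IsIrreducible]
    [Subsingleton (IntertwiningMap σ ρ)] {H : P →ₛₗ[I] P →ₗ[K] K} (hH : ∀ p, H p p = 0 → p = 0)
    (hHinv : ∀ g p q, H (π g p) (π g q) = H p q) {B : P →ₛₗ[I] P →ₗ[K] K}
    (hBinv : ∀ g p q, B (π g p) (π g q) = B p q) (f : IntertwiningMap ρ π)
    (h : IntertwiningMap σ π) (v : V) (w : W) : B (f v) (h w) = 0 := by
  obtain hf | rfl := IsIrreducible.injective_or_eq_zero f
  · have hsep : ((H.comp f.toLinearMap).compl₂ f.toLinearMap).SeparatingRight := fun v hv =>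
      (map_eq_zero_iff f hf).1 (hH _ (hv v))
    have hB0 := eq_zero_of_subsingleton_intertwiningMap (σ := σ) (ρ := ρ) hsep
      (B := (B.comp f.toLinearMap).compl₂ h.toLinearMap)
      (fun g v v' => by simp [f.isIntertwining, hHinv])
      (fun g v w => by simp [f.isIntertwining, h.isIntertwining, hBinv])
    exact LinearMap.congr_fun₂ hB0 v w
  · simp

/-- The `ρ`-isotypic part of a representation `π`, for irreducible `ρ`: the sum of the images of
all `G`-equivariant linear maps from `ρ` to `π`. -/
def isotypicPart (ρ : Representation K G V) (π : Representation K G P) : Submodule K P :=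
  ⨆ f : {f : V →ₗ[K] P // ∀ g v, f (ρ g v) = π g (f v)}, LinearMap.range f.val

lemma apply_eq_zero_of_mem_isotypicPart [FiniteDimensional K V] [ρ.IsIrreducible]
    [Subsingleton (IntertwiningMap σ ρ)] {H : P →ₛₗ[I] P →ₗ[K] K} (hH : ∀ p, H p p = 0 → p = 0)
    (hHinv : ∀ g p q, H (π g p) (π g q) = H p q) {B : P →ₛₗ[I] P →ₗ[K] K}
    (hBinv : ∀ g p q, B (π g p) (π g q) = B p q) {p q : P} (hp : p ∈ isotypicPart ρ π)
    (hq : q ∈ isotypicPart σ π) : B p q = 0 := by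
  have hρ : isotypicPart ρ π ≤ (B.flip q).ker := by
    refine iSup_le ?_
    rintro ⟨f, hf⟩ _ ⟨v, rfl⟩
    have hσ : isotypicPart σ π ≤ (B (f v)).ker := by
      refine iSup_le ?_
      rintro ⟨h, hh⟩ _ ⟨w, rfl⟩
      exact apply_intertwiningMap_eq_zero hH hHinv hBinv
        (f.intertwiningMap_of_isIntertwiningMap ρ π hf)
        (h.intertwiningMap_of_isIntertwiningMap σ π hh) v w
    exact hσ hq
  exact hρ hp

end Schur

section FDRep

universe u v

variable {R K : Type u} {G : Type v} [CommRing R] [Field K] [Monoid G]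

/-- An intertwining map between the representations underlying two objects of `FDRep R G`, as a
morphism of that category. -/
def homOfIntertwiningMap {X Y : FDRep R G} (f : Representation.IntertwiningMap X.ρ Y.ρ) : X ⟶ Y :=
  ⟨InducedCategory.homMk (ModuleCat.ofHom f.toLinearMap), fun g => by
    ext x; exact f.isIntertwining _ _ g x⟩

lemma homOfIntertwiningMap_apply {X Y : FDRep R G} (f : Representation.IntertwiningMap X.ρ Y.ρ)
    (x : X.V) : (homOfIntertwiningMap f).hom x = f x := rfl

lemma homOfIntertwiningMap_eq_zero {X Y : FDRep R G}
    {f : Representation.IntertwiningMap X.ρ Y.ρ} (hf : homOfIntertwiningMap f = 0) : f = 0 := by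
  refine DFunLike.ext _ _ fun x => ?_
  rw [← homOfIntertwiningMap_apply, hf]
  rfl

lemma subsingleton_intertwiningMap_of_simple {X Y : FDRep K G} [Simple X] [Simple Y]
    (hXY : IsEmpty (X ≅ Y)) : Subsingleton (Representation.IntertwiningMap X.ρ Y.ρ) := by
  refine subsingleton_of_forall_eq 0 fun f => homOfIntertwiningMap_eq_zero ?_
  by_contra hne
  have := isIso_of_hom_simple hne
  exact hXY.false (asIso (homOfIntertwiningMap f))

lemma isIrreducible_of_simple (X : FDRep K G) [Simple X] :
    Representation.IsIrreducible (X.ρ : Representation K G X.V) := by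
  have hnontrivial : Nontrivial X.V := by
    by_contra h
    rw [not_nontrivial_iff_subsingleton] at h
    refine id_nonzero X ?_
    ext x
    exact Subsingleton.elim _ _
  refine { exists_pair_ne := ⟨⊥, ⊤, fun h => ?_⟩, eq_bot_or_eq_top := fun S => ?_ }
  · exact bot_ne_top (congrArg Subrepresentation.toSubmodule h)
  · let ι : Representation.IntertwiningMap (FDRep.of S.toRepresentation).ρ X.ρ :=
      ⟨S.toSubmodule.subtype, fun g => rfl⟩
    have hmono : Mono (homOfIntertwiningMap ι) :=
      ConcreteCategory.mono_of_injective _ Subtype.val_injective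
    by_cases h0 : homOfIntertwiningMap ι = 0
    · left
      have hι := homOfIntertwiningMap_eq_zero h0
      refine Subrepresentation.toSubmodule_injective ((Submodule.eq_bot_iff _).2 fun x hx => ?_)
      exact DFunLike.congr_fun hι ⟨x, hx⟩
    · right
      have := isIso_of_mono_of_nonzero h0
      refine Subrepresentation.toSubmodule_injective (Submodule.eq_top_iff'.2 fun x => ?_)
      obtain ⟨y, hy⟩ :=
        (FDRep.isoToLinearEquiv (asIso (homOfIntertwiningMap ι))).surjective x
      exact hy ▸ y.2

end FDRep

theorem stmt11_general (n : ℕ) (G : Subgroup (Matrix.unitaryGroup (Fin n) ℂ))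
    (T : Fin n → Module.End ℂ (MvPolynomial (Fin n) ℂ)) (hT : ∀ i j, Commute (T i) (T j))
    (hTdeg : ∀ i m p, IsHomogeneous p (m + 1) → IsHomogeneous (T i p) m)
    (hT0 : ∀ i c, T i (C c) = 0)
    (hTequiv : ∀ (g : G) i p, act n (matOf g⁻¹) (T i (act n (matOf g) p)) =
      ∑ j, matOf g j i • T j p) :
    (∀ (g : G) p q, pairK (fun i => T i) (polyRep G g p) (polyRep G g q) =
      pairK (fun i => T i) p q) ∧
    (∀ (ξ : Fin n → ℂ) p q,
      pairK (fun i => T i) ((∑ i, C ((starRingEnd ℂ) (ξ i)) * X i) * p) q =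
        pairK (fun i => T i) p (∑ i, ξ i • T i q)) ∧
    (∀ τ σ : FDRep ℂ G, Simple τ → Simple σ → ∀ m l p q, IsHomogeneous p m → IsHomogeneous q l →
      p ∈ isotypicPart τ.ρ (polyRep G) → q ∈ isotypicPart σ.ρ (polyRep G) →
      (m ≠ l ∨ IsEmpty (τ ≅ σ)) → pairK (fun i => T i) p q = 0) := by
  simp only [pairK_eq_operatorPairing T hT]
  have hinv := operatorPairing_polyRep T hT hTequiv
  refine ⟨hinv, fun ξ p q => ?_, fun τ σ _ _ m l p q hp hq hpτ hqσ h => ?_⟩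
  · simp only [operatorPairing_sum_mul_left, Complex.conj_conj]
  · obtain hml | hτσ := h
    · exact operatorPairing_eq_zero_of_degree_ne T hT hTdeg hT0 hp hq hml
    · have := isIrreducible_of_simple τ
      have := subsingleton_intertwiningMap_of_simple (X := σ) (Y := τ) ⟨fun e => hτσ.false e.symm⟩
      exact apply_eq_zero_of_mem_isotypicPart (fun p => fischerPairing_self_eq_zero)
        fischerPairing_polyRep hinv hpτ hqσ

/-- the pairing `(p,q)_k = (p*(T(k))q)(0)` on polynomials is (i)
`G`-invariant, (ii) contravariant: `(ξ*p, q)_k = (p, T_ξ(k)q)_k`, and (iii) distinct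
homogeneous isotypic components `P_{m,τ}`, `P_{l,σ}` are orthogonal unless `m = l` and
`τ ≅ σ`. -/
theorem stmt11 (n : ℕ)
    (G : Subgroup (Matrix.unitaryGroup (Fin n) ℂ)) [Fintype G]
    -- the (commuting) Dunkl operators `T_i = T_{e_i}(k)`, homogeneous of degree −1,
    -- `G`-equivariant: `g T_ξ g⁻¹ = T_{gξ}`
    (T : Fin n → MvPolynomial (Fin n) ℂ → MvPolynomial (Fin n) ℂ)
    (hTcomm : ∀ (i j : Fin n) (p : MvPolynomial (Fin n) ℂ), T i (T j p) = T j (T i p))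
    (hTadd : ∀ (i : Fin n) (p q : MvPolynomial (Fin n) ℂ), T i (p + q) = T i p + T i q)
    (hTsmul : ∀ (i : Fin n) (c : ℂ) (p : MvPolynomial (Fin n) ℂ), T i (c • p) = c • T i p)
    (hTdeg : ∀ (i : Fin n) (m : ℕ) (p : MvPolynomial (Fin n) ℂ),
      p.IsHomogeneous (m + 1) → (T i p).IsHomogeneous m)
    (hT0 : ∀ (i : Fin n) (c : ℂ), T i (C c) = 0)
    (hTequiv : ∀ (g : G) (i : Fin n) (p : MvPolynomial (Fin n) ℂ),
      act n (matOf g⁻¹) (T i (act n (matOf g) p)) = ∑ j, matOf g j i • T j p) :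
    -- (i) `G`-invariance
    (∀ (g : G) (p q : MvPolynomial (Fin n) ℂ),
      pairK T (act n (matOf g⁻¹) p) (act n (matOf g⁻¹) q) = pairK T p q) ∧
    -- (ii) contravariance
    (∀ (ξ : Fin n → ℂ) (p q : MvPolynomial (Fin n) ℂ),
      pairK T ((∑ i, C ((starRingEnd ℂ) (ξ i)) * X i) * p) q =
        pairK T p (∑ i, ξ i • T i q)) ∧
    -- (iii) orthogonality of distinct homogeneous isotypic components
    (∀ (τ σ : FDRep ℂ G), Simple τ → Simple σ →
      ∀ (m l : ℕ) (p q : MvPolynomial (Fin n) ℂ),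
      p.IsHomogeneous m → q.IsHomogeneous l →
      p ∈ (⨆ f : {f : τ.V →ₗ[ℂ] MvPolynomial (Fin n) ℂ //
              ∀ (g : G) (v : τ.V), f (τ.ρ g v) = act n (matOf g⁻¹) (f v)},
            LinearMap.range f.val) →
      q ∈ (⨆ f : {f : σ.V →ₗ[ℂ] MvPolynomial (Fin n) ℂ //
              ∀ (g : G) (v : σ.V), f (σ.ρ g v) = act n (matOf g⁻¹) (f v)},
            LinearMap.range f.val) →
      (m ≠ l ∨ IsEmpty (τ ≅ σ)) → pairK T p q = 0) :=
  stmt11_general n G (fun i => { toFun := T i, map_add' := hTadd i, map_smul' := hTsmul i })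
    (fun i j => LinearMap.ext (hTcomm i j)) hTdeg hT0 hTequiv
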